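/- arXiv:1905.13481 — 3 statements merged into one kernel-verified Lean document; each statement's English description precedes it below -/
import Mathlib

section
/- The space of unordered pairs of points on the circle, Sym2 Circle, is homeomorphic to the Möbius strip, defined as the quotient of the square [0,1] × [0,1] by identifying (0,y) with (1, 1−y) for every y ∈ [0,1]. -/
/-- The closed unit interval `[0,1] ⊆ ℝ` with the subspace topology. -/
abbrev I01 : Type := Set.Icc (0 : ℝ) 1

/-- The relation on the unit square `[0,1] × [0,1]` identifying `(0,y)` with
`(1, 1-y)` for every `y ∈ [0,1]`.  The quotient `Quot mobiusRel` (the Möbius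
strip) is the quotient by the equivalence relation generated by this relation,
with the quotient topology. -/
def mobiusRel (p q : I01 × I01) : Prop :=
  (p.1 : ℝ) = 0 ∧ (q.1 : ℝ) = 1 ∧ (q.2 : ℝ) = 1 - (p.2 : ℝ)

/-! Send `(x, t) ∈ ℝ²` to the unordered pair `{e^{iπ(x + t)}, e^{iπ(x - t)}}`. This is a continuous
surjection onto `Sym2 Circle` whose fibres are the orbits of the group generated by
`(x, t) ↦ (x + 1, t + 1)`, `(x, t) ↦ (x, t + 2)` and `(x, t) ↦ (x, -t)`. The unit square is a
fundamental domain: the only boundary points it identifies are `(0, t) ∼ (1, 1 - t)`. Hence the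
Möbius strip, which is compact, maps continuously and bijectively onto `Sym2 Circle`, which is
Hausdorff.
-/

section Sym2Topology

variable {X : Type*} [TopologicalSpace X]

theorem isOpenQuotientMap_sym2_mk : IsOpenQuotientMap (Sym2.mk (α := X)).uncurry where
  surjective := Sym2.mk_surjective
  continuous := continuous_quot_mk
  isOpenMap U hU := by
    have saturation : (Sym2.mk (α := X)).uncurry ⁻¹' ((Sym2.mk (α := X)).uncurry '' U) =
        U ∪ Prod.swap ⁻¹' U := by
      ext ⟨a, b⟩
      simp only [Set.mem_preimage, Set.mem_image, Prod.exists, Function.uncurry_apply_pair,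
        Sym2.eq_iff, Set.mem_union, Prod.swap_prod_mk]
      constructor
      · rintro ⟨c, d, hcd, ⟨rfl, rfl⟩ | ⟨rfl, rfl⟩⟩
        exacts [.inl hcd, .inr hcd]
      · rintro (hab | hba)
        exacts [⟨a, b, hab, .inl ⟨rfl, rfl⟩⟩, ⟨b, a, hba, .inr ⟨rfl, rfl⟩⟩]
    rw [← isQuotientMap_quot_mk.isOpen_preimage]
    exact saturation ▸ hU.union (hU.preimage continuous_swap)

instance instT2SpaceSym2 [T2Space X] : T2Space (Sym2 X) := by
  rw [t2Space_iff_of_isOpenQuotientMap isOpenQuotientMap_sym2_mk]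
  simp only [Function.uncurry_def, Sym2.mk_eq_mk_iff]
  exact (isClosed_eq continuous_fst continuous_snd).union
    (isClosed_eq continuous_fst (continuous_swap.comp continuous_snd))

end Sym2Topology

open Real

theorem circle_exp_pi_mul_eq_iff {u v : ℝ} :
    Circle.exp (π * u) = Circle.exp (π * v) ↔ ∃ m : ℤ, u - v = 2 * m := by
  rw [Circle.exp_eq_exp]
  refine exists_congr fun m ↦ ?_
  rw [show π * v + m * (2 * π) = π * (v + 2 * m) by ring, mul_right_inj' pi_ne_zero,
    sub_eq_iff_eq_add']

theorem circle_exp_add_sub_eq_iff {x t x' t' : ℝ} :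
    (Circle.exp (π * (x + t)) = Circle.exp (π * (x' + t')) ∧
      Circle.exp (π * (x - t)) = Circle.exp (π * (x' - t'))) ↔
      ∃ k l : ℤ, Even (k + l) ∧ x - x' = k ∧ t - t' = l := by
  simp only [circle_exp_pi_mul_eq_iff]
  constructor
  · rintro ⟨⟨m, hm⟩, n, hn⟩
    refine ⟨m + n, m - n, ⟨m, by ring⟩, ?_, ?_⟩ <;> push_cast <;> linarith
  · rintro ⟨k, l, ⟨m, hm⟩, hk, hl⟩
    have hkl : (k : ℝ) + l = m + m := mod_cast hm
    refine ⟨⟨m, by linarith⟩, k - m, ?_⟩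
    push_cast
    linarith

/-- The unordered pair of points of the circle with angles `π * (x ± t)`, so that `π * x` is the
mean of the two angles and `π * t` half their difference. The factor `π` makes the unit square a
fundamental domain. -/
noncomputable def circlePair (x t : ℝ) : Sym2 Circle :=
  s(Circle.exp (π * (x + t)), Circle.exp (π * (x - t)))

theorem continuous_circlePair : Continuous fun p : ℝ × ℝ ↦ circlePair p.1 p.2 := by
  have angles : Continuous fun p : ℝ × ℝ ↦
      (Circle.exp (π * (p.1 + p.2)), Circle.exp (π * (p.1 - p.2))) := by fun_prop
  exact isOpenQuotientMap_sym2_mk.continuous.comp angles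

theorem circlePair_eq_iff {x t x' t' : ℝ} :
    circlePair x t = circlePair x' t' ↔
      ∃ k l : ℤ, Even (k + l) ∧ x - x' = k ∧ (t - t' = l ∨ t + t' = l) := by
  have swapped := circle_exp_add_sub_eq_iff (x := x) (t := t) (x' := x') (t' := -t')
  simp only [sub_neg_eq_add, ← sub_eq_add_neg] at swapped
  simp only [circlePair, Sym2.eq_iff, circle_exp_add_sub_eq_iff, swapped, and_or_left, exists_or]

theorem exists_circlePair_eq (z : Sym2 Circle) : ∃ x t : ℝ, circlePair x t = z := by
  obtain ⟨a, b⟩ := z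
  obtain ⟨α, rfl⟩ := Circle.exp_surjective a
  obtain ⟨β, rfl⟩ := Circle.exp_surjective b
  refine ⟨(α + β) / (2 * π), (α - β) / (2 * π), ?_⟩
  unfold circlePair
  congr 3 <;> field_simp <;> ring

theorem exists_mem_Icc_circlePair_eq (x t : ℝ) :
    ∃ x' ∈ Set.Icc (0 : ℝ) 1, ∃ t' ∈ Set.Icc (0 : ℝ) 1, circlePair x t = circlePair x' t' := by
  let l : ℤ := ⌊x⌋ + 2 * round ((t - ⌊x⌋) / 2)
  have hl : |t - l| ≤ 1 := by
    have round_error := abs_sub_round ((t - ⌊x⌋) / 2)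
    simp only [l, abs_le] at round_error ⊢
    push_cast
    constructor <;> linarith
  refine ⟨Int.fract x, ⟨Int.fract_nonneg x, (Int.fract_lt_one x).le⟩, |t - l|,
    ⟨abs_nonneg _, hl⟩, circlePair_eq_iff.2 ⟨⌊x⌋, l, ?_, Int.self_sub_fract x, ?_⟩⟩
  · exact ⟨⌊x⌋ + round ((t - ⌊x⌋) / 2), by ring⟩
  · rcases abs_choice (t - l) with h | h <;> rw [h]
    exacts [.inl (by ring), .inr (by ring)]

section UnitInterval

variable {R : Type*} [CommRing R] [LinearOrder R] [IsStrictOrderedRing R] {t t' : R}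

theorem eq_neg_one_or_zero_or_one_of_sub_eq_intCast {k : ℤ} (ht : t ∈ Set.Icc (0 : R) 1)
    (ht' : t' ∈ Set.Icc (0 : R) 1) (hk : t - t' = k) : k = -1 ∨ k = 0 ∨ k = 1 := by
  have lower : (-1 : R) ≤ k := by linarith [ht.1, ht'.2]
  have upper : (k : R) ≤ 1 := by linarith [ht.2, ht'.1]
  norm_cast at lower upper
  lia

theorem eq_of_even_of_sub_or_add_eq_intCast {l : ℤ} (ht : t ∈ Set.Icc (0 : R) 1)
    (ht' : t' ∈ Set.Icc (0 : R) 1) (hl : Even l) (h : t - t' = l ∨ t + t' = l) : t = t' := by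
  rcases h with hsub | hadd
  · have hl0 : l = 0 := by
      have hl1 := eq_neg_one_or_zero_or_one_of_sub_eq_intCast ht ht' hsub
      grind
    rwa [hl0, Int.cast_zero, sub_eq_zero] at hsub
  · have hl02 : l = 0 ∨ l = 2 := by
      have hsub : t - (1 - t') = (l - 1 : ℤ) := by push_cast; linarith
      have hl1 := eq_neg_one_or_zero_or_one_of_sub_eq_intCast ht (Set.Icc.one_sub_mem ht') hsub
      grind
    rcases hl02 with rfl | rfl <;> push_cast at hadd <;> linarith [ht.1, ht.2, ht'.1, ht'.2]

theorem eq_one_sub_of_odd_of_sub_or_add_eq_intCast {l : ℤ} (ht : t ∈ Set.Icc (0 : R) 1)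
    (ht' : t' ∈ Set.Icc (0 : R) 1) (hl : Odd l) (h : t - t' = l ∨ t + t' = l) : t = 1 - t' := by
  have ht'_symm : 1 - t' ∈ Set.Icc (0 : R) 1 := Set.Icc.one_sub_mem ht'
  rcases h with hsub | hadd
  · refine eq_of_even_of_sub_or_add_eq_intCast ht ht'_symm hl.add_one (.inr ?_)
    push_cast
    linarith
  · refine eq_of_even_of_sub_or_add_eq_intCast ht ht'_symm (hl.sub_odd odd_one) (.inl ?_)
    push_cast
    linarith

end UnitInterval

theorem circlePair_eq_of_mobiusRel {p q : I01 × I01} (h : mobiusRel p q) :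
    circlePair p.1 p.2 = circlePair q.1 q.2 := by
  obtain ⟨hp, hq, hpq⟩ := h
  refine circlePair_eq_iff.2 ⟨-1, 1, by decide, ?_, .inr ?_⟩ <;> simp [hp, hq, hpq]

theorem eq_or_mobiusRel_of_circlePair_eq {p q : I01 × I01}
    (h : circlePair p.1 p.2 = circlePair q.1 q.2) : p = q ∨ mobiusRel p q ∨ mobiusRel q p := by
  obtain ⟨⟨x, hx⟩, t, ht⟩ := p
  obtain ⟨⟨x', hx'⟩, t', ht'⟩ := q
  obtain ⟨k, l, hkl, hk, hl⟩ := circlePair_eq_iff.1 h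
  dsimp only at hk hl
  simp only [mobiusRel, Prod.mk.injEq, Subtype.mk.injEq]
  rcases eq_neg_one_or_zero_or_one_of_sub_eq_intCast hx hx' hk with rfl | rfl | rfl <;>
    push_cast at hk
  · have htt' := eq_one_sub_of_odd_of_sub_or_add_eq_intCast ht ht' (by grind) hl
    exact .inr (.inl ⟨by linarith [hx.1, hx'.2], by linarith [hx.1, hx'.2], by linarith⟩)
  · have htt' := eq_of_even_of_sub_or_add_eq_intCast ht ht' (by simpa using hkl) hl
    exact .inl ⟨sub_eq_zero.1 hk, htt'⟩
  · have htt' := eq_one_sub_of_odd_of_sub_or_add_eq_intCast ht ht' (by grind) hl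
    exact .inr (.inr ⟨by linarith [hx.2, hx'.1], by linarith [hx.2, hx'.1], htt'⟩)

/-- The map from the Möbius strip to unordered pairs of points of the circle induced by
`circlePair`. -/
noncomputable def mobiusToSym2Circle : Quot mobiusRel → Sym2 Circle :=
  Quot.lift (fun p ↦ circlePair p.1 p.2) fun _ _ ↦ circlePair_eq_of_mobiusRel

theorem continuous_mobiusToSym2Circle : Continuous mobiusToSym2Circle := by
  have coords : Continuous fun p : I01 × I01 ↦ ((p.1 : ℝ), (p.2 : ℝ)) := by fun_prop
  exact continuous_quot_lift _ (continuous_circlePair.comp coords)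

theorem mobiusToSym2Circle_injective : Function.Injective mobiusToSym2Circle := by
  rintro ⟨p⟩ ⟨q⟩ h
  rcases eq_or_mobiusRel_of_circlePair_eq h with rfl | hpq | hqp
  exacts [rfl, Quot.sound hpq, (Quot.sound hqp).symm]

theorem mobiusToSym2Circle_surjective : Function.Surjective mobiusToSym2Circle := by
  intro z
  obtain ⟨x, t, rfl⟩ := exists_circlePair_eq z
  obtain ⟨x', hx', t', ht', h⟩ := exists_mem_Icc_circlePair_eq x t
  exact ⟨Quot.mk _ (⟨x', hx'⟩, ⟨t', ht'⟩), h.symm⟩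

/-- The space of unordered pairs of points on the circle is homeomorphic to the
Möbius strip. -/
theorem sym2_circle_homeomorph_mobius :
    Nonempty (Sym2 Circle ≃ₜ Quot mobiusRel) := by
  have isHomeomorph : IsHomeomorph mobiusToSym2Circle :=
    isHomeomorph_iff_continuous_bijective.2 ⟨continuous_mobiusToSym2Circle,
      mobiusToSym2Circle_injective, mobiusToSym2Circle_surjective⟩
  exact ⟨isHomeomorph.homeomorph.symm⟩
end

section
/- The quotient space of the cylinder Circle × [0,1] obtained by collapsing the boundary circle Circle × {0} to a single point and collapsing the boundary circle Circle × {1} to a (different) single point is homeomorphic to the unit sphere in ℝ³. -/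
/-- The relation on the cylinder `Circle × [0,1]` collapsing the boundary circle
`Circle × {0}` to one point and the boundary circle `Circle × {1}` to another point.
The quotient `Quot collapseEndsRel` is the quotient by the equivalence relation
generated by this relation, with the quotient topology. -/
def collapseEndsRel (p q : Circle × I01) : Prop :=
  ((p.2 : ℝ) = 0 ∧ (q.2 : ℝ) = 0) ∨ ((p.2 : ℝ) = 1 ∧ (q.2 : ℝ) = 1)

open Metric Module Real Topology
open scoped unitInterval

theorem isHomeomorph_quotLift {X Y : Type*} [TopologicalSpace X] [TopologicalSpace Y]
    {r : X → X → Prop} {f : X → Y} (hf : IsQuotientMap f)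
    (h : ∀ a b, f a = f b ↔ Relation.EqvGen r a b) :
    IsHomeomorph (Quot.lift f fun a b hab => (h a b).2 (.rel a b hab)) := by
  refine isHomeomorph_iff_isQuotientMap_injective.2
    ⟨isQuotientMap_quot_mk.of_comp_isQuotientMap hf, ?_⟩
  rintro ⟨a⟩ ⟨b⟩ hab
  exact Quot.eqvGen_sound ((h a b).1 hab)

theorem sin_eq_zero_iff_of_mem_Icc {θ : ℝ} (hθ : θ ∈ Set.Icc 0 π) :
    sin θ = 0 ↔ θ = 0 ∨ θ = π := by
  constructor
  · intro h
    by_contra! hne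
    exact (sin_pos_of_pos_of_lt_pi (hθ.1.lt_of_ne' hne.1) (hθ.2.lt_of_ne hne.2)).ne' h
  · rintro (rfl | rfl)
    exacts [sin_zero, sin_pi]

/-- The relation on the cylinder `X × [0, 1]` whose quotient, for nonempty `X`, is the unreduced
suspension of `X`. Its shape is that of `collapseEndsRel`, which is the case `X = Circle`. -/
def suspensionRel (X : Type*) (p q : X × I) : Prop :=
  ((p.2 : ℝ) = 0 ∧ (q.2 : ℝ) = 0) ∨ ((p.2 : ℝ) = 1 ∧ (q.2 : ℝ) = 1)

theorem eqvGen_suspensionRel_iff {X : Type*} {p q : X × I} :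
    Relation.EqvGen (suspensionRel X) p q ↔ suspensionRel X p q ∨ p = q := by
  constructor
  · intro h
    induction h with
    | rel p q h => exact .inl h
    | refl p => exact .inr rfl
    | symm p q _ ih => unfold suspensionRel at *; grind
    | trans p q r _ _ ihpq ihqr => unfold suspensionRel at *; grind
  · rintro (h | rfl)
    exacts [.rel _ _ h, .refl _]

section NormedSpace

variable {E : Type*} [NormedAddCommGroup E] [NormedSpace ℝ E]

theorem exists_norm_eq_one_and_norm_smul_eq [Nontrivial E] (v : E) :
    ∃ x : E, ‖x‖ = 1 ∧ ‖v‖ • x = v := by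
  rcases eq_or_ne v 0 with rfl | hv
  · obtain ⟨x, hx⟩ := exists_norm_eq E zero_le_one
    exact ⟨x, hx, by simp⟩
  · exact ⟨‖v‖⁻¹ • v, norm_smul_inv_norm hv, smul_inv_smul₀ (norm_ne_zero_iff.2 hv) v⟩

/-- The point of `E ⊕ ℝ` at polar angle `θ` from the north pole `(0, 1)`, on the meridian through
the equatorial point `(x, 0)`. -/
noncomputable def polarPoint (x : E) (θ : ℝ) : WithLp 2 (E × ℝ) :=
  .toLp 2 (sin θ • x, cos θ)

theorem continuous_polarPoint : Continuous fun p : E × ℝ => polarPoint p.1 p.2 := by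
  unfold polarPoint
  fun_prop

theorem norm_polarPoint {x : E} (hx : ‖x‖ = 1) (θ : ℝ) : ‖polarPoint x θ‖ = 1 := by
  simp [polarPoint, WithLp.prod_norm_eq_of_L2, norm_smul, hx]

theorem polarPoint_eq_iff {x y : E} {θ φ : ℝ} (hθ : θ ∈ Set.Icc 0 π) (hφ : φ ∈ Set.Icc 0 π) :
    polarPoint x θ = polarPoint y φ ↔ θ = φ ∧ (sin θ = 0 ∨ x = y) := by
  have hsmul : sin θ • x = sin θ • y ↔ sin θ = 0 ∨ x = y := by
    rw [← sub_eq_zero, ← smul_sub, smul_eq_zero, sub_eq_zero]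
  calc polarPoint x θ = polarPoint y φ
    _ ↔ cos θ = cos φ ∧ sin θ • x = sin φ • y := by simp [polarPoint, and_comm]
    _ ↔ θ = φ ∧ sin θ • x = sin φ • y := by rw [injOn_cos.eq_iff hθ hφ]
    _ ↔ θ = φ ∧ (sin θ = 0 ∨ x = y) := and_congr_right fun h => by rw [← h, hsmul]

theorem exists_polarPoint_eq [Nontrivial E] {v : WithLp 2 (E × ℝ)} (hv : ‖v‖ = 1) :
    ∃ x : E, ‖x‖ = 1 ∧ ∃ θ ∈ Set.Icc 0 π, polarPoint x θ = v := by
  have hsq : ‖v.fst‖ ^ 2 + v.snd ^ 2 = 1 := by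
    simpa [hv] using (WithLp.prod_norm_sq_eq_of_L2 v).symm
  have hsnd : |v.snd| ≤ 1 := abs_le_one_iff_mul_self_le_one.2 (by nlinarith [sq_nonneg ‖v.fst‖])
  have hsin : sin (arccos v.snd) = ‖v.fst‖ := by
    rw [sin_arccos, ← eq_sub_of_add_eq hsq, sqrt_sq (norm_nonneg _)]
  have hcos : cos (arccos v.snd) = v.snd := cos_arccos (abs_le.1 hsnd).1 (abs_le.1 hsnd).2
  obtain ⟨x, hx, hxv⟩ := exists_norm_eq_one_and_norm_smul_eq v.fst
  refine ⟨x, hx, arccos v.snd, ⟨arccos_nonneg _, arccos_le_pi _⟩, ?_⟩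
  rw [polarPoint, hsin, hcos, hxv]
  rfl

/-- Polar coordinates on the unit sphere of `E ⊕ ℝ`, with the polar angle rescaled from `[0, π]` to
`[0, 1]`. -/
noncomputable def suspensionMap (p : sphere (0 : E) 1 × I) : sphere (0 : WithLp 2 (E × ℝ)) 1 :=
  ⟨polarPoint p.1 (π * p.2),
    mem_sphere_zero_iff_norm.2 (norm_polarPoint (norm_eq_of_mem_sphere p.1) _)⟩

theorem continuous_suspensionMap : Continuous (suspensionMap (E := E)) := by
  have h : Continuous fun p : sphere (0 : E) 1 × I => ((p.1 : E), π * (p.2 : ℝ)) := by fun_prop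
  exact (continuous_polarPoint.comp h).subtype_mk _

theorem suspensionMap_surjective [Nontrivial E] : Function.Surjective (suspensionMap (E := E)) := by
  intro v
  obtain ⟨x, hx, θ, hθ, hv⟩ := exists_polarPoint_eq (norm_eq_of_mem_sphere v)
  refine ⟨(⟨x, mem_sphere_zero_iff_norm.2 hx⟩, ⟨θ / π, unitInterval.div_mem hθ.1 pi_nonneg hθ.2⟩),
    Subtype.ext ?_⟩
  simpa only [suspensionMap, mul_div_cancel₀ θ pi_ne_zero] using hv

theorem suspensionMap_eq_iff {p q : sphere (0 : E) 1 × I} :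
    suspensionMap p = suspensionMap q ↔ suspensionRel (sphere (0 : E) 1) p q ∨ p = q := by
  have hangle (t : I) : π * (t : ℝ) ∈ Set.Icc 0 π :=
    ⟨mul_nonneg pi_nonneg t.2.1, mul_le_of_le_one_right pi_nonneg t.2.2⟩
  have hsin : sin (π * (p.2 : ℝ)) = 0 ↔ (p.2 : ℝ) = 0 ∨ (p.2 : ℝ) = 1 := by
    simp [sin_eq_zero_iff_of_mem_Icc (hangle p.2), pi_ne_zero]
  calc suspensionMap p = suspensionMap q
    _ ↔ π * (p.2 : ℝ) = π * (q.2 : ℝ) ∧ (sin (π * (p.2 : ℝ)) = 0 ∨ (p.1 : E) = q.1) :=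
      Subtype.ext_iff.trans (polarPoint_eq_iff (hangle p.2) (hangle q.2))
    _ ↔ (p.2 : ℝ) = q.2 ∧ (((p.2 : ℝ) = 0 ∨ (p.2 : ℝ) = 1) ∨ (p.1 : E) = q.1) := by
      rw [hsin, mul_right_inj' pi_ne_zero]
    _ ↔ suspensionRel (sphere (0 : E) 1) p q ∨ p = q := by
      rw [suspensionRel, Prod.ext_iff, Subtype.ext_iff, Subtype.ext_iff]
      grind

theorem isQuotientMap_suspensionMap [ProperSpace E] [Nontrivial E] :
    IsQuotientMap (suspensionMap (E := E)) :=
  .of_surjective_continuous suspensionMap_surjective continuous_suspensionMap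

theorem nonempty_quot_suspensionRel_homeomorph_sphere [ProperSpace E] [Nontrivial E] :
    Nonempty (Quot (suspensionRel (sphere (0 : E) 1)) ≃ₜ sphere (0 : WithLp 2 (E × ℝ)) 1) :=
  ⟨(isHomeomorph_quotLift isQuotientMap_suspensionMap fun _ _ =>
    suspensionMap_eq_iff.trans eqvGen_suspensionRel_iff.symm).homeomorph⟩

end NormedSpace

theorem nonempty_sphere_homeomorph_of_finrank_eq {E F : Type*}
    [NormedAddCommGroup E] [InnerProductSpace ℝ E] [FiniteDimensional ℝ E]
    [NormedAddCommGroup F] [InnerProductSpace ℝ F] [FiniteDimensional ℝ F]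
    (h : finrank ℝ E = finrank ℝ F) (r : ℝ) : Nonempty (sphere (0 : E) r ≃ₜ sphere (0 : F) r) :=
  let e := (stdOrthonormalBasis ℝ E).equiv (stdOrthonormalBasis ℝ F) (finCongr h)
  ⟨e.toHomeomorph.subtype fun x => by simp⟩

theorem cylinder_collapse_ends_homeomorph_sphere_general {E F : Type*}
    [NormedAddCommGroup E] [InnerProductSpace ℝ E] [FiniteDimensional ℝ E] [Nontrivial E]
    [NormedAddCommGroup F] [InnerProductSpace ℝ F] (h : finrank ℝ F = finrank ℝ E + 1) :
    Nonempty (Quot (suspensionRel (sphere (0 : E) 1)) ≃ₜ sphere (0 : F) 1) := by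
  have : FiniteDimensional ℝ F := .of_finrank_pos (by lia)
  have hdim : finrank ℝ (WithLp 2 (E × ℝ)) = finrank ℝ F := by
    rw [(WithLp.linearEquiv 2 ℝ (E × ℝ)).finrank_eq, finrank_prod, finrank_self, h]
  obtain ⟨e⟩ := nonempty_quot_suspensionRel_homeomorph_sphere (E := E)
  obtain ⟨e'⟩ := nonempty_sphere_homeomorph_of_finrank_eq hdim 1
  exact ⟨e.trans e'⟩

/-- Collapsing each of the two boundary circles of the cylinder to a point
yields the unit sphere in `ℝ³`. -/
theorem cylinder_collapse_ends_homeomorph_sphere :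
    Nonempty (Quot collapseEndsRel ≃ₜ {x : EuclideanSpace ℝ (Fin 3) // ‖x‖ = 1}) := by
  -- `Circle` unfolds to `sphere (0 : ℂ) 1`, and then `collapseEndsRel` to `suspensionRel`.
  obtain ⟨e⟩ := cylinder_collapse_ends_homeomorph_sphere_general (E := ℂ)
    (F := EuclideanSpace ℝ (Fin 3)) (by simp)
  exact ⟨e.trans ((Homeomorph.refl _).subtype fun _ => mem_sphere_zero_iff_norm)⟩
end

section
/- The torus Circle × Circle is not simply connected; consequently, the unit sphere in ℝ³ (which is simply connected) is not homeomorphic to the torus. (The torus has a hole, while the sphere does not.) -/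
/-!
The exponential `ℝ → Circle` is a non-injective covering map, whereas a path-connected covering
of a simply connected space is injective; hence the circle, and with it any product having the
circle as a retract, is not simply connected.

For the sphere, let `v ≠ 0` in a real vector space of dimension at least three. The complements of
the two closed rays spanned by `v` and `-v` are open and star-shaped, their intersection is the
complement of a line, hence path-connected, and their union is the complement of the origin. By the
elementary part of van Kampen's theorem the punctured space is simply connected, and it retracts
onto the sphere.
-/

open Set Topology unitInterval

section Homotopy

variable {X Y E : Type*} [TopologicalSpace X] [TopologicalSpace Y] [TopologicalSpace E]

theorem injective_of_isCoveringMap_of_simplyConnectedSpace [PathConnectedSpace E]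
    [SimplyConnectedSpace X] {p : E → X} (hp : IsCoveringMap p) : Function.Injective p := by
  intro e₀ e₁ he
  have monodromy_eq : hp.monodromy (.refl (p e₀)) ⟨e₀, rfl⟩ = ⟨e₁, he.symm⟩ :=
    hp.monodromy_eq_of_map_eq (.mk (PathConnectedSpace.somePath e₀ e₁)) (Subsingleton.elim _ _)
  rw [hp.monodromy_refl] at monodromy_eq
  exact congrArg Subtype.val monodromy_eq

theorem simplyConnectedSpace_of_leftInverse [SimplyConnectedSpace Y] {r : Y → X} {i : X → Y}
    (h : Function.LeftInverse r i) (hr : Continuous r) (hi : Continuous i) :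
    SimplyConnectedSpace X := by
  refine simply_connected_iff_paths_homotopic'.2
    ⟨h.surjective.pathConnectedSpace hr, fun {x y} p q ↦ ?_⟩
  have map_map_cast (γ : Path x y) : ((γ.map hi).map hr).cast (h x).symm (h y).symm = γ := by
    ext t
    exact h (γ t)
  rw [← map_map_cast p, ← map_map_cast q]
  exact ((SimplyConnectedSpace.paths_homotopic (p.map hi) (q.map hi)).map ⟨r, hr⟩).pathCast _ _

theorem homotopic_of_isSimplyConnected {U : Set X} (hU : IsSimplyConnected U) {x y : X}
    {p q : Path x y} (hp : ∀ t, p t ∈ U) (hq : ∀ t, q t ∈ U) : p.Homotopic q := by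
  have := hU.simplyConnectedSpace
  lift x to U using by simpa using hp 0
  lift y to U using by simpa using hp 1
  let p' : Path x y := ⟨⟨fun t ↦ ⟨p t, hp t⟩, by fun_prop⟩, by simp, by simp⟩
  let q' : Path x y := ⟨⟨fun t ↦ ⟨q t, hq t⟩, by fun_prop⟩, by simp, by simp⟩
  exact (SimplyConnectedSpace.paths_homotopic p' q').map ⟨Subtype.val, continuous_subtype_val⟩

theorem homotopic_of_isPathConnected_inter {U V : Set X} (hU : IsSimplyConnected U)
    (hV : IsSimplyConnected V) (hUV : IsPathConnected (U ∩ V)) {x y : X} {p q : Path x y}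
    (hp : ∀ t, p t ∈ U) (hq : ∀ t, q t ∈ V) : p.Homotopic q := by
  have source_mem : x ∈ U ∩ V := ⟨by simpa using hp 0, by simpa using hq 0⟩
  have target_mem : y ∈ U ∩ V := ⟨by simpa using hp 1, by simpa using hq 1⟩
  obtain ⟨r, hr⟩ := hUV.joinedIn x source_mem y target_mem
  exact (homotopic_of_isSimplyConnected hU hp fun t ↦ (hr t).1).trans
    (homotopic_of_isSimplyConnected hV (fun t ↦ (hr t).2) hq)

theorem simplyConnectedSpace_of_forall_homotopic [PathConnectedSpace X] (x₀ : X)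
    (h : ∀ (x : X) (p q : Path x₀ x), p.Homotopic q) : SimplyConnectedSpace X := by
  refine simply_connected_iff_paths_homotopic.2 ⟨inferInstance, fun x y ↦ ⟨fun p q ↦ ?_⟩⟩
  let r : Path.Homotopic.Quotient x₀ x := .mk (PathConnectedSpace.somePath x₀ x)
  have trans_eq : r.trans p = r.trans q := by
    induction p, q using Path.Homotopic.Quotient.ind₂ with
    | mk p q => exact Path.Homotopic.Quotient.eq.2 (h y _ _)
  simpa [← Path.Homotopic.Quotient.trans_assoc] using congrArg r.symm.trans trans_eq

section OpenCover

variable {ι : Type*} {U : ι → Set X} {x₀ : X}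

theorem homotopic_of_isOpen_cover (hUo : ∀ i, IsOpen (U i)) (hcover : ⋃ i, U i = univ)
    (hx₀ : ∀ i, x₀ ∈ U i) (hsc : ∀ i, IsSimplyConnected (U i))
    (hpc : ∀ i j, IsPathConnected (U i ∩ U j)) {x : X} (γ : Path x₀ x) {k : ι} {q : Path x₀ x}
    (hq : ∀ t, q t ∈ U k) : γ.Homotopic q := by
  obtain ⟨t, t_zero, t_mono, ⟨n, t_eq_one⟩, t_cover⟩ :=
    exists_monotone_Icc_subset_open_cover_unitInterval
      (fun i ↦ (hUo i).preimage γ.continuous) (by rw [← preimage_iUnion, hcover, preimage_univ])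
  have start_mem (i : ι) : γ (t 0) ∈ U i := by simpa [t_zero] using hx₀ i
  have initial_homotopic (m : ℕ) : ∀ (k : ι) (q : Path (γ (t 0)) (γ (t m))),
      (∀ s, q s ∈ U k) → (γ.subpath (t 0) (t m)).Homotopic q := by
    induction m with
    | zero =>
      intro k q hq
      exact homotopic_of_isSimplyConnected (hsc k) (fun s ↦ by simpa using start_mem k) hq
    | succ m ih =>
      intro k q hq
      obtain ⟨i, hi⟩ := t_cover m
      let seg := γ.subpath (t m) (t (m + 1))
      have seg_mem (s : I) : seg s ∈ U i := by
        have : seg s ∈ γ '' Icc (t m) (t (m + 1)) :=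
          γ.range_subpath_of_le _ _ (t_mono m.le_succ) ▸ mem_range_self s
        exact image_subset_iff.2 hi this
      have joint_mem : γ (t m) ∈ U i := by simpa [seg] using seg_mem 0
      obtain ⟨p, hp⟩ := (hsc i).isPathConnected.joinedIn _ (start_mem i) _ joint_mem
      have trans_mem (s : I) : p.trans seg s ∈ U i := by
        rw [Path.trans_apply]
        split_ifs
        exacts [hp _, seg_mem _]
      calc
        (γ.subpath (t 0) (t (m + 1))).Homotopic ((γ.subpath (t 0) (t m)).trans seg) :=
          ⟨(Path.Homotopy.subpathTransSubpath γ _ _ _).symm⟩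
        Path.Homotopic _ (p.trans seg) := (ih i p hp).hcomp (.refl seg)
        Path.Homotopic _ q := homotopic_of_isPathConnected_inter (hsc i) (hsc k) (hpc i k)
          trans_mem hq
  have cast_homotopic := initial_homotopic n k
  rw [t_zero, t_eq_one n le_rfl, γ.subpath_zero_one] at cast_homotopic
  exact (cast_homotopic (q.cast γ.source γ.target) hq).pathCast γ.source.symm γ.target.symm

theorem simplyConnectedSpace_of_isOpen_cover (hUo : ∀ i, IsOpen (U i)) (hcover : ⋃ i, U i = univ)
    (hx₀ : ∀ i, x₀ ∈ U i) (hsc : ∀ i, IsSimplyConnected (U i))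
    (hpc : ∀ i j, IsPathConnected (U i ∩ U j)) : SimplyConnectedSpace X := by
  have exists_path_mem (x : X) : ∃ (k : ι) (q : Path x₀ x), ∀ t, q t ∈ U k := by
    obtain ⟨k, hk⟩ := iUnion_eq_univ_iff.1 hcover x
    exact ⟨k, (hsc k).isPathConnected.joinedIn _ (hx₀ k) _ hk⟩
  have : PathConnectedSpace X := pathConnectedSpace_iff_univ.2
    ⟨x₀, mem_univ _, fun x _ ↦ (exists_path_mem x).elim fun _ ⟨q, _⟩ ↦ ⟨q, fun _ ↦ mem_univ _⟩⟩
  refine simplyConnectedSpace_of_forall_homotopic x₀ fun x p₁ p₂ ↦ ?_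
  obtain ⟨k, q, hq⟩ := exists_path_mem x
  exact (homotopic_of_isOpen_cover hUo hcover hx₀ hsc hpc p₁ hq).trans
    (homotopic_of_isOpen_cover hUo hcover hx₀ hsc hpc p₂ hq).symm

theorem isSimplyConnected_iUnion [Nonempty ι] (hUo : ∀ i, IsOpen (U i)) (hx₀ : ∀ i, x₀ ∈ U i)
    (hsc : ∀ i, IsSimplyConnected (U i)) (hpc : ∀ i j, IsPathConnected (U i ∩ U j)) :
    IsSimplyConnected (⋃ i, U i) := by
  let V (i : ι) : Set (⋃ i, U i) := Subtype.val ⁻¹' U i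
  have image_V {s : Set X} (i : ι) (hs : s ⊆ U i) :
      Subtype.val '' (Subtype.val ⁻¹' s : Set (⋃ i, U i)) = s := by
    rw [Subtype.image_preimage_coe, inter_eq_right]
    exact hs.trans (subset_iUnion U i)
  refine simplyConnectedSpace_of_isOpen_cover (U := V)
    (x₀ := ⟨x₀, mem_iUnion.2 ⟨Classical.arbitrary ι, hx₀ _⟩⟩)
    (fun i ↦ (hUo i).preimage continuous_subtype_val) ?_ hx₀ (fun i ↦ ?_) fun i j ↦ ?_
  · rw [← preimage_iUnion, Subtype.coe_preimage_self]
  · rw [← IsEmbedding.subtypeVal.isSimplyConnected_image, image_V i subset_rfl]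
    exact hsc i
  · rw [IsInducing.subtypeVal.isPathConnected_iff, ← preimage_inter,
      image_V i inter_subset_left]
    exact hpc i j

end OpenCover

theorem isSimplyConnected_union {U V : Set X} (hUo : IsOpen U) (hVo : IsOpen V)
    (hU : IsSimplyConnected U) (hV : IsSimplyConnected V) (hUV : IsPathConnected (U ∩ V)) :
    IsSimplyConnected (U ∪ V) := by
  obtain ⟨x₀, hx₀U, hx₀V⟩ := hUV.nonempty
  rw [union_eq_iUnion]
  refine isSimplyConnected_iUnion (x₀ := x₀) ?_ ?_ ?_ ?_
  · exact Bool.forall_bool.2 ⟨hVo, hUo⟩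
  · exact Bool.forall_bool.2 ⟨hx₀V, hx₀U⟩
  · exact Bool.forall_bool.2 ⟨hV, hU⟩
  · simpa [Bool.forall_bool, inter_comm V U, hUV] using ⟨hV.isPathConnected, hU.isPathConnected⟩

end Homotopy

theorem not_simplyConnectedSpace_circle : ¬ SimplyConnectedSpace Circle := fun _ ↦
  Real.two_pi_pos.ne <|
    injective_of_isCoveringMap_of_simplyConnectedSpace Circle.isCoveringMap_exp <| by simp

theorem not_simplyConnectedSpace_circle_prod (Y : Type*) [TopologicalSpace Y] :
    ¬ SimplyConnectedSpace (Circle × Y) := by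
  intro h
  obtain ⟨_, y⟩ : Nonempty (Circle × Y) := inferInstance
  exact not_simplyConnectedSpace_circle <| simplyConnectedSpace_of_leftInverse
    (r := Prod.fst) (i := (·, y)) (fun _ ↦ rfl) continuous_fst (by fun_prop)

theorem one_lt_rank_quotient_span_singleton {K E : Type*} [DivisionRing K] [AddCommGroup E]
    [Module K E] (hE : 2 < Module.rank K E) (v : E) : 1 < Module.rank K (E ⧸ K ∙ v) := by
  by_contra! h
  refine hE.not_ge ?_
  calc
    Module.rank K E = Module.rank K (E ⧸ K ∙ v) + Module.rank K (K ∙ v) :=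
      (Submodule.rank_quotient_add_rank _).symm
    _ ≤ 1 + 1 := add_le_add h ((rank_span_le _).trans_eq (Cardinal.mk_singleton v))
    _ = 2 := one_add_one_eq_two

section Ray

variable {K E : Type*} [Field K] [LinearOrder K] [IsStrictOrderedRing K] [AddCommGroup E]
  [Module K E]

theorem setOf_not_sameRay_union_neg {v : E} (hv : v ≠ 0) :
    {y | ¬ SameRay K v y} ∪ {y | ¬ SameRay K (-v) y} = {0}ᶜ := by
  ext y
  suffices SameRay K v y ∧ SameRay K (-v) y ↔ y = 0 by simpa [← not_and_or] using this.not
  refine ⟨fun ⟨h, h_neg⟩ ↦ by_contra fun hy ↦ hv ?_, by rintro rfl; simp⟩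
  exact eq_zero_of_sameRay_self_neg (h.trans h_neg.symm fun h0 ↦ absurd h0 hy)

theorem setOf_not_sameRay_inter_neg {v : E} (hv : v ≠ 0) :
    {y | ¬ SameRay K v y} ∩ {y | ¬ SameRay K (-v) y} = ((K ∙ v : Submodule K E) : Set E)ᶜ := by
  ext y
  have := sameRay_or_sameRay_neg_iff_not_linearIndependent (R := K) (x := v) (y := y)
  rw [← sameRay_neg_swap, ← not_iff_not, not_not, not_or, LinearIndependent.pair_iff' hv] at this
  simpa [Submodule.mem_span_singleton] using this

end Ray

section TopologicalVectorSpace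

variable {E : Type*} [AddCommGroup E] [Module ℝ E] [TopologicalSpace E]
  [IsTopologicalAddGroup E] [ContinuousSMul ℝ E]

theorem isOpen_setOf_not_sameRay [T2Space E] {v : E} (hv : v ≠ 0) :
    IsOpen {y | ¬ SameRay ℝ v y} := by
  have ray_eq_image : {y | SameRay ℝ v y} = (· • v) '' Ici (0 : ℝ) := by
    ext y
    exact (exists_nonneg_left_iff_sameRay hv).symm
  rw [← compl_ofPred, isOpen_compl_iff, ray_eq_image]
  exact isClosedMap_smul_left v _ isClosed_Ici

theorem isSimplyConnected_setOf_not_sameRay {v : E} (hv : v ≠ 0) :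
    IsSimplyConnected {y | ¬ SameRay ℝ v y} := by
  have neg_mem : -v ∈ {y | ¬ SameRay ℝ v y} := fun h ↦ hv (eq_zero_of_sameRay_self_neg h)
  have starConvex : StarConvex ℝ (-v) {y | ¬ SameRay ℝ v y} := by
    refine (starConvex_iff_forall_pos neg_mem).2 fun y hy a b ha hb _ h ↦ hy ?_
    have sameRay_smul : SameRay ℝ v (b • y) := by
      simpa using h.add_right (SameRay.sameRay_nonneg_smul_right v ha.le)
    simpa [smul_smul, hb.ne'] using sameRay_smul.pos_smul_right (inv_pos.2 hb)
  have := starConvex.contractibleSpace ⟨_, neg_mem⟩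
  exact SimplyConnectedSpace.ofContractible _

theorem isSimplyConnected_compl_singleton_of_two_lt_rank [T2Space E]
    (hE : 2 < Module.rank ℝ E) (x : E) : IsSimplyConnected ({x}ᶜ : Set E) := by
  suffices IsSimplyConnected ({0}ᶜ : Set E) by
    have preimage_eq : Homeomorph.subRight x ⁻¹' {0}ᶜ = {x}ᶜ := by
      ext y
      simp [sub_eq_zero]
    rwa [← preimage_eq, Homeomorph.isSimplyConnected_preimage]
  have : Nontrivial E := rank_pos_iff_nontrivial.1 (two_pos.trans hE)
  obtain ⟨v, hv⟩ := exists_ne (0 : E)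
  rw [← setOf_not_sameRay_union_neg (K := ℝ) hv]
  refine isSimplyConnected_union (isOpen_setOf_not_sameRay hv)
    (isOpen_setOf_not_sameRay (neg_ne_zero.2 hv)) (isSimplyConnected_setOf_not_sameRay hv)
    (isSimplyConnected_setOf_not_sameRay (neg_ne_zero.2 hv)) ?_
  rw [setOf_not_sameRay_inter_neg hv]
  exact isPathConnected_compl_of_one_lt_codim (one_lt_rank_quotient_span_singleton hE v)

end TopologicalVectorSpace

theorem isSimplyConnected_sphere_of_two_lt_rank {E : Type*} [NormedAddCommGroup E]
    [NormedSpace ℝ E] (hE : 2 < Module.rank ℝ E) (x : E) {r : ℝ} (hr : 0 < r) :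
    IsSimplyConnected (Metric.sphere x r) := by
  have := (isSimplyConnected_compl_singleton_of_two_lt_rank hE x).simplyConnectedSpace
  have norm_ne_zero (y : ({x}ᶜ : Set E)) : ‖(y : E) - x‖ ≠ 0 :=
    norm_ne_zero_iff.2 (sub_ne_zero.2 y.2)
  let radialProjection (y : ({x}ᶜ : Set E)) : Metric.sphere x r :=
    ⟨x + (r / ‖(y : E) - x‖) • ((y : E) - x), by
      simp [norm_smul, abs_of_pos hr, norm_ne_zero y]⟩
  let inclusion (z : Metric.sphere x r) : ({x}ᶜ : Set E) := ⟨z, Metric.ne_of_mem_sphere z.2 hr.ne'⟩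
  refine simplyConnectedSpace_of_leftInverse (r := radialProjection) (i := inclusion)
    (fun z ↦ Subtype.ext ?_) (by fun_prop (disch := exact norm_ne_zero _)) (by fun_prop)
  simp [radialProjection, inclusion, mem_sphere_iff_norm.1 z.2, hr.ne']

theorem torus_not_simplyConnected_and_sphere_not_homeomorph_torus_general (Y : Type*)
    [TopologicalSpace Y] {E : Type*} [NormedAddCommGroup E] [NormedSpace ℝ E]
    (hE : 2 < Module.rank ℝ E) :
    ¬ SimplyConnectedSpace (Circle × Y) ∧
      SimplyConnectedSpace {x : E // ‖x‖ = 1} ∧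
      IsEmpty ({x : E // ‖x‖ = 1} ≃ₜ Circle × Y) := by
  have torus := not_simplyConnectedSpace_circle_prod Y
  have sphere : SimplyConnectedSpace {x : E // ‖x‖ = 1} := by
    have sphere_eq : Metric.sphere (0 : E) 1 = {x | ‖x‖ = 1} := by
      ext x
      exact mem_sphere_zero_iff_norm
    have := isSimplyConnected_sphere_of_two_lt_rank hE 0 one_pos
    rwa [sphere_eq] at this
  exact ⟨torus, sphere, ⟨fun e ↦ torus (e.toHomotopyEquiv.simplyConnectedSpace_iff.1 sphere)⟩⟩

/-- The torus `Circle × Circle` is not simply connected, while the unit sphere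
in `ℝ³` is simply connected; consequently the sphere is not homeomorphic to the
torus. -/
theorem torus_not_simplyConnected_and_sphere_not_homeomorph_torus :
    ¬ SimplyConnectedSpace (Circle × Circle) ∧
      SimplyConnectedSpace {x : EuclideanSpace ℝ (Fin 3) // ‖x‖ = 1} ∧
      IsEmpty ({x : EuclideanSpace ℝ (Fin 3) // ‖x‖ = 1} ≃ₜ Circle × Circle) :=
  torus_not_simplyConnected_and_sphere_not_homeomorph_torus_general Circle
    (by rw [← Module.finrank_eq_rank, finrank_euclideanSpace_fin]; norm_cast)
end
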